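/- Let u(z) = (1 − z)² and let φ be the infinite Blaschke product with zero sequence (1 − 1/n²)_{n ≥ 1} (this sequence satisfies the Blaschke condition Σ 1/n² < ∞, so φ is a well-defined holomorphic self-map of 𝔻). Then the weighted composition operator W_{u,φ} : f ↦ u·(f∘φ) is bounded on the Dirichlet space 𝒟; that is, there is a constant C such that ‖(1−z)²·(f∘φ)‖_𝒟 ≤ C‖f‖_𝒟 for all f ∈ 𝒟. -/

import Mathlib

open Complex MeasureTheory Metric Set Filter

noncomputable section

/-- The open unit disc in the complex plane. -/
def unitDisc : Set ℂ := Metric.ball 0 1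

/-- The square of the Dirichlet norm:
`‖f‖²_𝒟 = |f(0)|² + ∫_𝔻 |f′(z)|² dA(z)`, with `A` normalized area measure. -/
def dirNormSq (f : ℂ → ℂ) : ℝ :=
  ‖f 0‖ ^ 2 + (1 / Real.pi) * ∫ z in unitDisc, ‖deriv f z‖ ^ 2

/-- Membership in the Dirichlet space `𝒟`: `f` is holomorphic on `𝔻` and
`|f′|²` is integrable over `𝔻`. -/
def MemDirichlet (f : ℂ → ℂ) : Prop :=
  DifferentiableOn ℂ f unitDisc ∧
    IntegrableOn (fun z : ℂ => ‖deriv f z‖ ^ 2) unitDisc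

/-- The weighted composition operator `W_{u,φ} : f ↦ u·(f∘φ)` is bounded
on the Dirichlet space: there is a constant `C` with
`‖u·(f∘φ)‖²_𝒟 ≤ C ‖f‖²_𝒟` (and `u·(f∘φ) ∈ 𝒟`) for all `f ∈ 𝒟`. -/
def WCOBounded (u φ : ℂ → ℂ) : Prop :=
  ∃ C : ℝ, 0 ≤ C ∧ ∀ f : ℂ → ℂ, MemDirichlet f →
    MemDirichlet (fun z => u z * f (φ z)) ∧
      dirNormSq (fun z => u z * f (φ z)) ≤ C * dirNormSq f

/-- The zeros `1 − 1/n²` for `n ≥ 2` (indexed by `n - 2 : ℕ`). -/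
def blaschkeZero (n : ℕ) : ℂ := 1 - 1 / ((n : ℂ) + 2) ^ 2

/-- The infinite Blaschke product with zero sequence `(1 − 1/n²)_{n ≥ 1}`:
the zero for `n = 1` is `0` (contributing the factor `z`); for `n ≥ 2` the
zeros `a = 1 − 1/n²` are real and positive, so the normalized Blaschke factor
`(|a|/a)(a − z)/(1 − \bar{a} z)` is `(a − z)/(1 − \bar{a} z)`. -/
def blaschkeProd : ℂ → ℂ := fun z =>
  z * ∏' n : ℕ, (blaschkeZero n - z) / (1 - (starRingEnd ℂ) (blaschkeZero n) * z)

/-!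
By the product rule, `(u · f ∘ φ)' = u' · f ∘ φ + (u φ') · f' ∘ φ`, so it suffices that `u'` and
`u φ'` are bounded, that composition with `φ` is a contraction for the `L²` norm of the disc, and
that the `L²` norm of `f` is controlled by `|f 0|` and the `L²` norm of `f'` (a Poincaré
inequality).

The contraction is Littlewood's subordination principle for `φ 0 = 0`. On a circle `|z| = ρ` and for
a polynomial `p = a + X q` it follows by induction on the degree: the constant `a` is orthogonal to
functions vanishing at `0`, on both sides, and `|φ| ≤ ρ = |z|` by the Schwarz lemma. General `f` are
limits of polynomials, and integrating over `ρ` gives the disc. The Poincaré inequality is the case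
of the self-maps `z ↦ t z`, integrated over `t ∈ [0, 1]`.

For a zero `a` in a Stolz angle at `1`, `|1 - z| ≤ C |1 - ā z|`, so the derivative
`(|a|² - 1) / (1 - ā z)²` of the Blaschke factor is at most `2 C² (1 - |a|) / |1 - z|²`. Since all
Blaschke factors have modulus at most `1`, summing over the zeros bounds `(1 - z)² φ'`.
-/

section CircleAverage

variable {c : ℂ} {ρ : ℝ} {h φ : ℂ → ℂ}

lemma circleAverage_norm_sq_const_add (hρ : 0 ≤ ρ) (hh : DiffContOnCl ℂ h (ball c ρ))
    (hc : h c = 0) (a : ℂ) :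
    Real.circleAverage (fun z => ‖a + h z‖ ^ 2) c ρ =
      ‖a‖ ^ 2 + Real.circleAverage (fun z => ‖h z‖ ^ 2) c ρ := by
  have hcont : ContinuousOn h (sphere c ρ) :=
    hh.continuousOn_ball.mono sphere_subset_closedBall
  have hcross_int : CircleIntegrable (fun z => 2 * inner ℝ a (h z)) c ρ :=
    ContinuousOn.circleIntegrable hρ (by fun_prop)
  have hcross : Real.circleAverage (fun z => inner ℝ a (h z)) c ρ = 0 := by
    have hmean : Real.circleAverage h c ρ = 0 := by
      rw [DiffContOnCl.circleAverage (by rwa [abs_of_nonneg hρ]), hc]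
    have := (innerSL ℝ a).circleAverage_comp_comm (hcont.circleIntegrable hρ)
    rwa [hmean, map_zero] at this
  have hsq_int : CircleIntegrable (fun z => ‖h z‖ ^ 2) c ρ :=
    ContinuousOn.circleIntegrable hρ (by fun_prop)
  have hconst_int : CircleIntegrable (fun _ => ‖a‖ ^ 2) c ρ :=
    ContinuousOn.circleIntegrable hρ continuousOn_const
  simp_rw [norm_add_sq_real]
  rw [Real.circleAverage_fun_add (hconst_int.fun_add hcross_int) hsq_int,
    Real.circleAverage_fun_add hconst_int hcross_int, Real.circleAverage_const]
  simp_rw [← smul_eq_mul (2 : ℝ)]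
  rw [Real.circleAverage_fun_smul, hcross, smul_zero, add_zero]

lemma circleAverage_norm_sq_polynomial_comp_le (hρ : 0 ≤ ρ) (hφ : DiffContOnCl ℂ φ (ball 0 ρ))
    (hφ₀ : φ 0 = 0) (hφρ : ∀ z ∈ sphere (0 : ℂ) ρ, ‖φ z‖ ≤ ρ) (p : Polynomial ℂ) :
    Real.circleAverage (fun z => ‖p.eval (φ z)‖ ^ 2) 0 ρ ≤
      Real.circleAverage (fun z => ‖p.eval z‖ ^ 2) 0 ρ := by
  have hcont : ContinuousOn φ (sphere 0 ρ) := hφ.continuousOn_ball.mono sphere_subset_closedBall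
  induction p using Polynomial.recOnHorner with
  | M0 => simp
  | MC p a hp _ ih =>
    have hp_comp : DiffContOnCl ℂ (fun z => p.eval (φ z)) (ball 0 ρ) :=
      p.differentiable.comp_diffContOnCl hφ
    have hp₀ : p.eval 0 = 0 := by rwa [← Polynomial.coeff_zero_eq_eval_zero]
    simp_rw [Polynomial.eval_add, Polynomial.eval_C, add_comm _ a]
    rw [circleAverage_norm_sq_const_add hρ hp_comp (by rw [hφ₀, hp₀]),
      circleAverage_norm_sq_const_add hρ p.differentiable.diffContOnCl hp₀]
    gcongr
  | MX p _ ih =>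
    calc
      _ ≤ Real.circleAverage (fun z => ρ ^ 2 • ‖p.eval (φ z)‖ ^ 2) 0 ρ := by
        refine Real.circleAverage_mono (ContinuousOn.circleIntegrable hρ (by fun_prop))
          (ContinuousOn.circleIntegrable hρ (by fun_prop)) fun z hz => ?_
        rw [abs_of_nonneg hρ] at hz
        rw [Polynomial.eval_mul_X, norm_mul, mul_pow, mul_comm, smul_eq_mul]
        gcongr
        exact hφρ z hz
      _ = ρ ^ 2 • Real.circleAverage (fun z => ‖p.eval (φ z)‖ ^ 2) 0 ρ :=
        Real.circleAverage_fun_smul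
      _ ≤ ρ ^ 2 • Real.circleAverage (fun z => ‖p.eval z‖ ^ 2) 0 ρ := by gcongr
      _ = Real.circleAverage (fun z => ρ ^ 2 • ‖p.eval z‖ ^ 2) 0 ρ :=
        Real.circleAverage_fun_smul.symm
      _ = _ := by
        refine Real.circleAverage_congr_sphere fun z hz => ?_
        rw [abs_of_nonneg hρ, mem_sphere_zero_iff_norm] at hz
        rw [Polynomial.eval_mul_X, norm_mul, mul_pow, hz, mul_comm, smul_eq_mul]

lemma tendsto_circleAverage_of_tendstoUniformlyOn {ι E : Type*} [NormedAddCommGroup E]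
    [NormedSpace ℝ E] {l : Filter ι} [l.IsCountablyGenerated] {F : ι → ℂ → E} {f : ℂ → E}
    (hF : ∀ᶠ i in l, ContinuousOn (F i) (sphere c |ρ|))
    (hlim : TendstoUniformlyOn F f l (sphere c |ρ|)) :
    Tendsto (fun i => Real.circleAverage (F i) c ρ) l (nhds (Real.circleAverage f c ρ)) := by
  have hcirc : MapsTo (circleMap c ρ) (uIcc 0 (2 * Real.pi)) (sphere c |ρ|) :=
    fun θ _ => circleMap_mem_sphere' c ρ θ
  exact (TendstoUniformlyOn.tendsto_intervalIntegral_of_continuousOn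
    (hF.mono fun i hi => hi.comp (continuous_circleMap c ρ).continuousOn hcirc)
    ((hlim.comp (circleMap c ρ)).mono hcirc)).const_smul _

lemma exists_polynomial_tendstoUniformlyOn_closedBall {g : ℂ → ℂ} {R : ℝ} (hρ : 0 ≤ ρ)
    (hρR : ρ < R) (hg : DifferentiableOn ℂ g (ball 0 R)) :
    ∃ P : ℕ → Polynomial ℂ,
      TendstoUniformlyOn (fun n z => (P n).eval z) g atTop (closedBall 0 ρ) := by
  obtain ⟨r, hρr, hrR⟩ := exists_between hρR
  obtain ⟨s, hrs, hsR⟩ := exists_between hrR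
  lift r to NNReal using hρ.trans hρr.le
  lift s to NNReal using r.2.trans hrs.le
  have hseries := (hg.mono (closedBall_subset_ball hsR)).hasFPowerSeriesOnBall
    (r.2.trans_lt (NNReal.coe_lt_coe.1 hrs))
  refine ⟨fun n => ∑ k ∈ Finset.range n,
    Polynomial.C ((cauchyPowerSeries g 0 s).coeff k) * Polynomial.X ^ k, ?_⟩
  refine ((hseries.tendstoUniformlyOn (r' := r) (by exact_mod_cast hrs)).mono
    (closedBall_subset_ball hρr)).congr (.of_forall fun n z _ => ?_) |>.congr_right ?_
  · simp only [FormalMultilinearSeries.partialSum,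
      FormalMultilinearSeries.apply_eq_pow_smul_coeff, smul_eq_mul, Polynomial.eval_finsetSum,
      Polynomial.eval_mul, Polynomial.eval_C, Polynomial.eval_pow, Polynomial.eval_X, mul_comm]
  · intro z _
    simp

lemma circleAverage_norm_sq_comp_le {g : ℂ → ℂ} {R : ℝ} (hρ : 0 ≤ ρ) (hρR : ρ < R)
    (hg : DifferentiableOn ℂ g (ball 0 R)) (hφ : DiffContOnCl ℂ φ (ball 0 ρ)) (hφ₀ : φ 0 = 0)
    (hφρ : ∀ z ∈ sphere (0 : ℂ) ρ, ‖φ z‖ ≤ ρ) :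
    Real.circleAverage (fun z => ‖g (φ z)‖ ^ 2) 0 ρ ≤
      Real.circleAverage (fun z => ‖g z‖ ^ 2) 0 ρ := by
  obtain ⟨P, hP⟩ := exists_polynomial_tendstoUniformlyOn_closedBall hρ hρR hg
  have hlim : ∀ ψ : ℂ → ℂ, ContinuousOn ψ (sphere 0 ρ) → (∀ z ∈ sphere (0 : ℂ) ρ, ‖ψ z‖ ≤ ρ) →
      Tendsto (fun n => Real.circleAverage (fun z => ‖(P n).eval (ψ z)‖ ^ 2) 0 ρ) atTop
        (nhds (Real.circleAverage (fun z => ‖g (ψ z)‖ ^ 2) 0 ρ)) := by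
    intro ψ hψ hψρ
    have hmaps : MapsTo ψ (sphere 0 ρ) (closedBall 0 ρ) := fun z hz => by simpa using hψρ z hz
    have hgψ : ContinuousOn (fun z => ‖g (ψ z)‖) (sphere 0 ρ) :=
      ((hg.continuousOn.mono (closedBall_subset_ball hρR)).comp hψ hmaps).norm
    have hnorm := uniformContinuous_norm.comp_tendstoUniformlyOn ((hP.comp ψ).mono hmaps)
    have hsq := hnorm.tendstoLocallyUniformlyOn.mul₀ hnorm.tendstoLocallyUniformlyOn hgψ hgψ
    rw [tendstoLocallyUniformlyOn_iff_tendstoUniformlyOn_of_compact (isCompact_sphere 0 ρ)] at hsq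
    simp_rw [sq]
    refine tendsto_circleAverage_of_tendstoUniformlyOn ?_ ?_ <;> rw [abs_of_nonneg hρ]
    · exact .of_forall fun n => by fun_prop
    · exact hsq
  exact le_of_tendsto_of_tendsto' (hlim φ (hφ.continuousOn_ball.mono sphere_subset_closedBall) hφρ)
    (hlim id continuousOn_id fun z hz => (mem_sphere_zero_iff_norm.1 hz).le)
    fun n => circleAverage_norm_sq_polynomial_comp_le hρ hφ hφ₀ hφρ (P n)

end CircleAverage

section PolarCoordinates

lemma lintegral_ball_eq_lintegral_circleMap {R : ℝ} {F : ℂ → ENNReal}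
    (hF : ContinuousOn F (ball 0 R)) :
    ∫⁻ z in ball 0 R, F z =
      ∫⁻ r in Ioo 0 R, ENNReal.ofReal r *
        ∫⁻ θ in Ioo (-Real.pi) Real.pi, F (circleMap 0 r θ) := by
  classical
  have hmeas : Measurable ((ball 0 R).indicator F) := by
    rw [← piecewise_eq_indicator]
    exact hF.measurable_piecewise continuousOn_const measurableSet_ball
  have hpolar : ∀ p : ℝ × ℝ, Complex.polarCoord.symm p = circleMap 0 p.1 p.2 := fun p => by
    rw [Complex.polarCoord_symm_apply, circleMap_zero, Complex.exp_mul_I]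
    push_cast
    rfl
  have hcont : Continuous fun p : ℝ × ℝ => circleMap 0 p.1 p.2 := by
    unfold circleMap
    fun_prop
  have hmem : ∀ r > 0, ∀ θ, circleMap 0 r θ ∈ ball (0 : ℂ) R ↔ r < R := fun r hr θ => by
    rw [mem_ball_zero_iff, norm_circleMap_zero, abs_of_pos hr]
  rw [← lintegral_indicator measurableSet_ball, ← Complex.lintegral_comp_polarCoord_symm]
  simp_rw [hpolar, smul_eq_mul]
  rw [polarCoord_target, Measure.volume_eq_prod, ← Measure.prod_restrict, lintegral_prod _
      (measurable_fst.ennreal_ofReal.fun_mul (hmeas.fun_comp hcont.measurable)).aemeasurable,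
    ← Ioi_inter_Iio (b := R), inter_comm, ← Measure.restrict_restrict measurableSet_Iio,
    ← lintegral_indicator measurableSet_Iio]
  refine setLIntegral_congr_fun measurableSet_Ioi fun r hr => ?_
  dsimp only
  rw [lintegral_const_mul _ (hmeas.fun_comp (continuous_circleMap 0 r).measurable)]
  by_cases hrR : r < R
  · simp only [hmem r hr, hrR, indicator_of_mem, mem_Iio]
  · simp only [hmem r hr, hrR, indicator_of_notMem, mem_Iio, not_false_eq_true, lintegral_zero,
      mul_zero]

lemma lintegral_circleMap_ofReal {F : ℂ → ℝ} {c : ℂ} {r : ℝ} (hF : CircleIntegrable F c r)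
    (hF₀ : ∀ z ∈ sphere c |r|, 0 ≤ F z) :
    ∫⁻ θ in Ioo (-Real.pi) Real.pi, ENNReal.ofReal (F (circleMap c r θ)) =
      ENNReal.ofReal (2 * Real.pi * Real.circleAverage F c r) := by
  have hper : Function.Periodic (fun θ => F (circleMap c r θ)) (2 * Real.pi) :=
    (periodic_circleMap c r).comp F
  have hint : IntegrableOn (fun θ => F (circleMap c r θ)) (Ioo (-Real.pi) Real.pi) :=
    (intervalIntegrable_iff_integrableOn_Ioo_of_le (by linarith [Real.pi_pos])).1
      (hper.intervalIntegrable₀ Real.two_pi_pos.ne' hF _ _)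
  rw [← ofReal_integral_eq_lintegral_ofReal hint
      (.of_forall fun θ => hF₀ _ (circleMap_mem_sphere' c r θ)),
    ← integral_Ioc_eq_integral_Ioo, ← intervalIntegral.integral_of_le (by linarith [Real.pi_pos]),
    Real.circleAverage_def, smul_eq_mul, mul_inv_cancel_left₀ Real.two_pi_pos.ne']
  congr 1
  have hshift := hper.intervalIntegral_add_eq (-Real.pi) 0
  rwa [zero_add, show -Real.pi + 2 * Real.pi = Real.pi by ring] at hshift

lemma lintegral_enorm_sq_comp_le {g φ : ℂ → ℂ} {R : ℝ} (hg : DifferentiableOn ℂ g (ball 0 R))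
    (hφ : DifferentiableOn ℂ φ (ball 0 R)) (hmaps : MapsTo φ (ball 0 R) (ball 0 R))
    (hφ₀ : φ 0 = 0) :
    ∫⁻ z in ball 0 R, ‖g (φ z)‖ₑ ^ 2 ≤ ∫⁻ z in ball 0 R, ‖g z‖ₑ ^ 2 := by
  have hcomp : ContinuousOn (fun z => g (φ z)) (ball 0 R) :=
    hg.continuousOn.comp hφ.continuousOn hmaps
  simp_rw [← ofReal_norm, ← ENNReal.ofReal_pow (norm_nonneg _)]
  rw [lintegral_ball_eq_lintegral_circleMap
      (ENNReal.continuous_ofReal.comp_continuousOn' (hcomp.norm.fun_pow 2)),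
    lintegral_ball_eq_lintegral_circleMap
      (ENNReal.continuous_ofReal.comp_continuousOn' (hg.continuousOn.norm.fun_pow 2))]
  refine setLIntegral_mono' measurableSet_Ioo fun r ⟨hr₀, hrR⟩ => ?_
  gcongr ENNReal.ofReal r * ?_
  have hball : closedBall (0 : ℂ) r ⊆ ball 0 R := closedBall_subset_ball hrR
  have hint : ∀ h : ℂ → ℂ, ContinuousOn h (ball 0 R) → CircleIntegrable (fun z => ‖h z‖ ^ 2) 0 r :=
    fun h hh => ContinuousOn.circleIntegrable hr₀.le
      ((hh.mono (sphere_subset_closedBall.trans hball)).norm.pow 2)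
  rw [lintegral_circleMap_ofReal (hint _ hcomp) fun z _ => by positivity,
    lintegral_circleMap_ofReal (hint _ hg.continuousOn) fun z _ => by positivity]
  gcongr ENNReal.ofReal (2 * Real.pi * ?_)
  refine circleAverage_norm_sq_comp_le hr₀.le hrR hg ?_ hφ₀ fun z hz => ?_
  · exact (hφ.mono hball).diffContOnCl_ball subset_rfl
  · have hzR : ‖z‖ < R := by rwa [mem_sphere_zero_iff_norm.1 hz]
    exact (Complex.norm_le_norm_of_mapsTo_ball hφ (hmaps.mono_right ball_subset_closedBall) hφ₀
      hzR).trans (mem_sphere_zero_iff_norm.1 hz).le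

end PolarCoordinates

lemma eLpNorm_two_sq {α E : Type*} [MeasurableSpace α] [ENorm E] (f : α → E) (μ : Measure α) :
    eLpNorm f 2 μ ^ 2 = ∫⁻ x, ‖f x‖ₑ ^ 2 ∂μ := by
  simpa using eLpNorm_nnreal_pow_eq_lintegral (f := f) (μ := μ) (p := 2) two_ne_zero

lemma enorm_integral_sq_le_lintegral_enorm_sq {α E : Type*} [MeasurableSpace α]
    [NormedAddCommGroup E] [NormedSpace ℝ E] {μ : Measure α} [IsProbabilityMeasure μ] {f : α → E}
    (hf : AEStronglyMeasurable f μ) : ‖∫ x, f x ∂μ‖ₑ ^ 2 ≤ ∫⁻ x, ‖f x‖ₑ ^ 2 ∂μ := by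
  rw [← eLpNorm_two_sq]
  gcongr
  calc
    ‖∫ x, f x ∂μ‖ₑ ≤ eLpNorm f 1 μ := by
      rw [eLpNorm_one_eq_lintegral_enorm]
      exact enorm_integral_le_lintegral_enorm f
    _ ≤ eLpNorm f 2 μ := eLpNorm_le_eLpNorm_of_exponent_le one_le_two hf

lemma enorm_sub_apply_zero_sq_le {s : Set ℂ} {f : ℂ → ℂ} {z : ℂ} (hs : IsOpen s)
    (hs₀ : StarConvex ℝ 0 s) (hf : DifferentiableOn ℂ f s) (hz : z ∈ s) :
    ‖f z - f 0‖ₑ ^ 2 ≤ ‖z‖ₑ ^ 2 * ∫⁻ t in Ioc (0 : ℝ) 1, ‖deriv f (t * z)‖ₑ ^ 2 := by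
  have hmem : ∀ t ∈ Icc (0 : ℝ) 1, (t : ℂ) * z ∈ s := fun t ht => by
    simpa using hs₀.smul_mem hz ht.1 ht.2
  have hcont : ContinuousOn (fun t : ℝ => deriv f (t * z)) (Icc 0 1) :=
    (hf.deriv hs).continuousOn.comp (by fun_prop) hmem
  have hftc : z * ∫ t in Ioc (0 : ℝ) 1, deriv f (t * z) = f z - f 0 := by
    have := intervalIntegral.integral_unitInterval_deriv_eq_sub (f := f) (f' := deriv f)
      (z₀ := 0) (z₁ := z) (by simpa using hcont) fun t ht => by
        simpa using (hf.differentiableAt (hs.mem_nhds (hmem t ht))).hasDerivAt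
    simpa [intervalIntegral.integral_of_le] using this
  have : IsProbabilityMeasure (volume.restrict (Ioc (0 : ℝ) 1)) := ⟨by simp⟩
  rw [← hftc, enorm_mul, mul_pow]
  gcongr
  exact enorm_integral_sq_le_lintegral_enorm_sq
    ((hcont.mono Ioc_subset_Icc_self).aestronglyMeasurable measurableSet_Ioc)

section DiscArea

lemma mem_unitDisc_iff {z : ℂ} : z ∈ unitDisc ↔ ‖z‖ < 1 := mem_ball_zero_iff

lemma isOpen_unitDisc : IsOpen unitDisc := isOpen_ball

/-- The normalized area measure `dA` of the unit disc, as a measure on `ℂ`. The `L²` norm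
`eLpNorm g 2 discArea` is the Bergman norm of `g`. -/
def discArea : Measure ℂ := ProbabilityTheory.cond volume unitDisc

lemma volume_unitDisc : volume unitDisc = ENNReal.ofReal Real.pi := by
  rw [unitDisc, Complex.volume_ball, ENNReal.ofReal_one, one_pow, one_mul,
    ← NNReal.coe_real_pi, ENNReal.ofReal_coe_nnreal]

lemma discArea_eq_smul : discArea = ENNReal.ofReal Real.pi⁻¹ • volume.restrict unitDisc := by
  rw [discArea, ProbabilityTheory.cond, volume_unitDisc, ENNReal.ofReal_inv_of_pos Real.pi_pos]

instance : IsProbabilityMeasure discArea :=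
  ProbabilityTheory.cond_isProbabilityMeasure_of_finite
    (by simp [volume_unitDisc, Real.pi_pos]) (by simp [volume_unitDisc])

lemma ae_discArea_of_forall_mem {p : ℂ → Prop} (h : ∀ z ∈ unitDisc, p z) :
    ∀ᵐ z ∂discArea, p z :=
  ProbabilityTheory.ae_cond_of_forall_mem isOpen_unitDisc.measurableSet h

lemma aestronglyMeasurable_discArea {g : ℂ → ℂ} (hg : ContinuousOn g unitDisc) :
    AEStronglyMeasurable g discArea :=
  (hg.aestronglyMeasurable isOpen_unitDisc.measurableSet).mono_ac
    (discArea_eq_smul ▸ Measure.smul_absolutelyContinuous)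

lemma memDirichlet_iff {f : ℂ → ℂ} :
    MemDirichlet f ↔ DifferentiableOn ℂ f unitDisc ∧ MemLp (deriv f) 2 discArea := by
  rw [MemDirichlet,
    memLp_two_iff_integrable_sq_norm (stronglyMeasurable_deriv f).aestronglyMeasurable,
    discArea_eq_smul, integrable_smul_measure (by simp [Real.pi_pos]) ENNReal.ofReal_ne_top,
    IntegrableOn]

lemma dirNormSq_eq {f : ℂ → ℂ} :
    dirNormSq f = ‖f 0‖ ^ 2 + (eLpNorm (deriv f) 2 discArea).toReal ^ 2 := by
  rw [← ENNReal.toReal_pow, eLpNorm_two_sq, discArea_eq_smul, lintegral_smul_measure,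
    smul_eq_mul, ENNReal.toReal_mul, ENNReal.toReal_ofReal (by positivity), dirNormSq,
    one_div, integral_eq_lintegral_of_nonneg_ae (.of_forall fun z => by positivity)
      ((measurable_deriv f).norm.pow_const 2).aestronglyMeasurable]
  simp only [ENNReal.ofReal_pow (norm_nonneg _), ofReal_norm]

lemma eLpNorm_comp_le_discArea {g φ : ℂ → ℂ} (hg : DifferentiableOn ℂ g unitDisc)
    (hφ : DifferentiableOn ℂ φ unitDisc) (hmaps : MapsTo φ unitDisc unitDisc) (hφ₀ : φ 0 = 0) :
    eLpNorm (fun z => g (φ z)) 2 discArea ≤ eLpNorm g 2 discArea := by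
  rw [← ENNReal.pow_le_pow_left_iff two_ne_zero, eLpNorm_two_sq, eLpNorm_two_sq,
    discArea_eq_smul, lintegral_smul_measure, lintegral_smul_measure]
  exact mul_le_mul_right (lintegral_enorm_sq_comp_le hg hφ hmaps hφ₀) _

lemma eLpNorm_sub_apply_zero_le_deriv {f : ℂ → ℂ} (hf : DifferentiableOn ℂ f unitDisc) :
    eLpNorm (fun z => f z - f 0) 2 discArea ≤ eLpNorm (deriv f) 2 discArea := by
  have hstar : StarConvex ℝ 0 unitDisc := (convex_ball 0 1).starConvex (by simp)
  rw [← ENNReal.pow_le_pow_left_iff two_ne_zero, eLpNorm_two_sq, eLpNorm_two_sq]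
  calc
    _ ≤ ∫⁻ z, (∫⁻ t in Ioc (0 : ℝ) 1, ‖deriv f (t * z)‖ₑ ^ 2) ∂discArea := by
      refine lintegral_mono_ae (ae_discArea_of_forall_mem fun z hz => ?_)
      refine (enorm_sub_apply_zero_sq_le isOpen_unitDisc hstar hf hz).trans
        (mul_le_of_le_one_left' ?_)
      rw [← ofReal_norm, ← ENNReal.ofReal_pow (norm_nonneg _)]
      exact ENNReal.ofReal_le_one.2 (pow_le_one₀ (norm_nonneg z) (mem_unitDisc_iff.1 hz).le)
    _ = ∫⁻ t in Ioc (0 : ℝ) 1, ∫⁻ z, ‖deriv f (t * z)‖ₑ ^ 2 ∂discArea :=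
      lintegral_lintegral_swap
        (((measurable_deriv f).comp (by fun_prop)).enorm.pow_const 2).aemeasurable
    _ ≤ ∫⁻ _ in Ioc (0 : ℝ) 1, ∫⁻ z, ‖deriv f z‖ₑ ^ 2 ∂discArea := by
      refine setLIntegral_mono' measurableSet_Ioc fun t ht => ?_
      simp_rw [← eLpNorm_two_sq]
      gcongr
      refine eLpNorm_comp_le_discArea (φ := fun z => t * z) (hf.deriv isOpen_unitDisc)
        (by fun_prop) (fun z hz => ?_) (mul_zero _)
      simpa using hstar.smul_mem hz ht.1.le ht.2
    _ = _ := by simp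

lemma eLpNorm_le_enorm_apply_zero_add_deriv {f : ℂ → ℂ} (hf : DifferentiableOn ℂ f unitDisc) :
    eLpNorm f 2 discArea ≤ ‖f 0‖ₑ + eLpNorm (deriv f) 2 discArea :=
  calc
    eLpNorm f 2 discArea = eLpNorm ((fun _ => f 0) + fun z => f z - f 0) 2 discArea := by
      congr 1
      ext z
      simp
    _ ≤ eLpNorm (fun _ => f 0) 2 discArea + eLpNorm (fun z => f z - f 0) 2 discArea :=
      eLpNorm_add_le aestronglyMeasurable_const
        (aestronglyMeasurable_discArea (hf.continuousOn.sub continuousOn_const)) one_le_two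
    _ ≤ ‖f 0‖ₑ + eLpNorm (deriv f) 2 discArea := by
      gcongr
      · simp [eLpNorm_const _ two_ne_zero (IsProbabilityMeasure.ne_zero discArea)]
      · exact eLpNorm_sub_apply_zero_le_deriv hf

end DiscArea

section WeightedComposition

variable {u φ : ℂ → ℂ}

lemma deriv_mul_comp {f : ℂ → ℂ} {z : ℂ} (hu : DifferentiableAt ℂ u z)
    (hφ : DifferentiableAt ℂ φ z) (hf : DifferentiableAt ℂ f (φ z)) :
    deriv (fun w => u w * f (φ w)) z =
      deriv u z * f (φ z) + u z * deriv φ z * deriv f (φ z) := by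
  refine (hu.hasDerivAt.fun_mul (hf.hasDerivAt.comp z hφ.hasDerivAt)).deriv.trans ?_
  simp only [Function.comp_apply]
  ring

lemma eLpNorm_mul_comp_le_discArea {v g : ℂ → ℂ} {K : ℝ} (hv : ∀ z ∈ unitDisc, ‖v z‖ ≤ K)
    (hg : DifferentiableOn ℂ g unitDisc) (hφ : DifferentiableOn ℂ φ unitDisc)
    (hmaps : MapsTo φ unitDisc unitDisc) (hφ₀ : φ 0 = 0) :
    eLpNorm (fun z => v z * g (φ z)) 2 discArea ≤ ENNReal.ofReal K * eLpNorm g 2 discArea :=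
  calc
    _ ≤ ENNReal.ofReal K * eLpNorm (fun z => g (φ z)) 2 discArea := by
      refine eLpNorm_le_mul_eLpNorm_of_ae_le_mul (ae_discArea_of_forall_mem fun z hz => ?_) 2
      rw [norm_mul]
      gcongr
      exact hv z hz
    _ ≤ _ := by
      gcongr
      exact eLpNorm_comp_le_discArea hg hφ hmaps hφ₀

lemma eLpNorm_deriv_mul_comp_le {f : ℂ → ℂ} {K M : ℝ} (hu : DifferentiableOn ℂ u unitDisc)
    (hφ : DifferentiableOn ℂ φ unitDisc) (hmaps : MapsTo φ unitDisc unitDisc) (hφ₀ : φ 0 = 0)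
    (hK : ∀ z ∈ unitDisc, ‖deriv u z‖ ≤ K) (hM : ∀ z ∈ unitDisc, ‖u z * deriv φ z‖ ≤ M)
    (hf : DifferentiableOn ℂ f unitDisc) :
    eLpNorm (deriv fun z => u z * f (φ z)) 2 discArea ≤
      ENNReal.ofReal K * eLpNorm f 2 discArea +
        ENNReal.ofReal M * eLpNorm (deriv f) 2 discArea := by
  have hf' : DifferentiableOn ℂ (deriv f) unitDisc := hf.deriv isOpen_unitDisc
  have hfφ : ContinuousOn (fun z => f (φ z)) unitDisc :=
    hf.continuousOn.comp hφ.continuousOn hmaps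
  have hf'φ : ContinuousOn (fun z => deriv f (φ z)) unitDisc :=
    hf'.continuousOn.comp hφ.continuousOn hmaps
  have hu' : ContinuousOn (deriv u) unitDisc := (hu.deriv isOpen_unitDisc).continuousOn
  have hφ' : ContinuousOn (deriv φ) unitDisc := (hφ.deriv isOpen_unitDisc).continuousOn
  calc
    eLpNorm (deriv fun z => u z * f (φ z)) 2 discArea
      = eLpNorm ((fun z => deriv u z * f (φ z)) +
          fun z => u z * deriv φ z * deriv f (φ z)) 2 discArea := by
      refine eLpNorm_congr_ae (ae_discArea_of_forall_mem fun z hz => ?_)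
      exact deriv_mul_comp (hu.differentiableAt (isOpen_unitDisc.mem_nhds hz))
        (hφ.differentiableAt (isOpen_unitDisc.mem_nhds hz))
        (hf.differentiableAt (isOpen_unitDisc.mem_nhds (hmaps hz)))
    _ ≤ eLpNorm (fun z => deriv u z * f (φ z)) 2 discArea +
          eLpNorm (fun z => u z * deriv φ z * deriv f (φ z)) 2 discArea :=
      eLpNorm_add_le (aestronglyMeasurable_discArea (hu'.mul hfφ))
        (aestronglyMeasurable_discArea ((hu.continuousOn.mul hφ').mul hf'φ)) one_le_two
    _ ≤ _ := by
      gcongr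
      · exact eLpNorm_mul_comp_le_discArea hK hf hφ hmaps hφ₀
      · exact eLpNorm_mul_comp_le_discArea hM hf' hφ hmaps hφ₀

theorem wcoBounded_of_norm_deriv_le {K M : ℝ} (hu : DifferentiableOn ℂ u unitDisc)
    (hφ : DifferentiableOn ℂ φ unitDisc) (hmaps : MapsTo φ unitDisc unitDisc) (hφ₀ : φ 0 = 0)
    (hK : ∀ z ∈ unitDisc, ‖deriv u z‖ ≤ K) (hM : ∀ z ∈ unitDisc, ‖u z * deriv φ z‖ ≤ M) :
    WCOBounded u φ := by
  have hzero : (0 : ℂ) ∈ unitDisc := by simp [mem_unitDisc_iff]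
  have hK₀ : 0 ≤ K := (norm_nonneg _).trans (hK 0 hzero)
  have hM₀ : 0 ≤ M := (norm_nonneg _).trans (hM 0 hzero)
  refine ⟨‖u 0‖ ^ 2 + K ^ 2 + (K + M) ^ 2, by positivity, fun f hf => ?_⟩
  rw [memDirichlet_iff] at hf ⊢
  obtain ⟨hf, hf'⟩ := hf
  have hbound : eLpNorm (deriv fun z => u z * f (φ z)) 2 discArea ≤
      ENNReal.ofReal (K * ‖f 0‖ + (K + M) * (eLpNorm (deriv f) 2 discArea).toReal) :=
    calc
      _ ≤ ENNReal.ofReal K * (‖f 0‖ₑ + eLpNorm (deriv f) 2 discArea) +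
          ENNReal.ofReal M * eLpNorm (deriv f) 2 discArea := by
        grw [eLpNorm_deriv_mul_comp_le hu hφ hmaps hφ₀ hK hM hf,
          eLpNorm_le_enorm_apply_zero_add_deriv hf]
      _ = _ := by
        rw [ENNReal.ofReal_add (by positivity) (by positivity), ENNReal.ofReal_mul hK₀,
          ENNReal.ofReal_mul (by positivity), ENNReal.ofReal_toReal hf'.eLpNorm_ne_top,
          ENNReal.ofReal_add hK₀ hM₀, ofReal_norm]
        ring
  refine ⟨⟨hu.mul (hf.comp hφ hmaps),
    (stronglyMeasurable_deriv _).aestronglyMeasurable, hbound.trans_lt ENNReal.ofReal_lt_top⟩, ?_⟩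
  rw [dirNormSq_eq, dirNormSq_eq, hφ₀, norm_mul]
  set x := ‖f 0‖
  set y := (eLpNorm (deriv f) 2 discArea).toReal
  have hbound_real : (eLpNorm (deriv fun z => u z * f (φ z)) 2 discArea).toReal ≤
      K * x + (K + M) * y := ENNReal.toReal_le_of_le_ofReal (by positivity) hbound
  calc
    _ ≤ (‖u 0‖ * x) ^ 2 + (K * x + (K + M) * y) ^ 2 := by gcongr
    _ ≤ (‖u 0‖ ^ 2 + K ^ 2 + (K + M) ^ 2) * (x ^ 2 + y ^ 2) := by
      nlinarith [sq_nonneg (K * y - (K + M) * x), sq_nonneg (‖u 0‖ * y)]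

end WeightedComposition

section InfiniteProduct

variable {ι : Type*}

lemma norm_deriv_finsetProd_le {𝕜 : Type*} [NontriviallyNormedField 𝕜] {f : ι → 𝕜 → 𝕜} {z : 𝕜}
    {s : Finset ι} (hf : ∀ i ∈ s, DifferentiableAt 𝕜 (f i) z) (hf_le : ∀ i ∈ s, ‖f i z‖ ≤ 1) :
    ‖deriv (fun x => ∏ i ∈ s, f i x) z‖ ≤ ∑ i ∈ s, ‖deriv (f i) z‖ := by
  classical
  rw [deriv_fun_finsetProd hf]
  refine norm_sum_le_of_le s fun i _ => ?_
  rw [norm_smul, norm_prod]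
  refine mul_le_of_le_one_left (norm_nonneg _) (Finset.prod_le_one (fun j _ => norm_nonneg _) ?_)
  exact fun j hj => hf_le j (Finset.mem_of_mem_erase hj)

lemma norm_le_one_of_hasProd {R : Type*} [NormedCommRing R] [NormOneClass R] {f : ι → R} {x : R}
    (hf : HasProd f x) (hf_le : ∀ i, ‖f i‖ ≤ 1) : ‖x‖ ≤ 1 :=
  le_of_tendsto (Filter.Tendsto.norm hf) (.of_forall fun s => (s.norm_prod_le f).trans
    (Finset.prod_le_one (fun _ _ => norm_nonneg _) fun i _ => hf_le i))

variable {f : ι → ℂ → ℂ} {F : ℂ → ℂ} {U : Set ℂ}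

lemma differentiableOn_of_hasProdLocallyUniformlyOn (hF : HasProdLocallyUniformlyOn f F U)
    (hU : IsOpen U) (hf : ∀ i, DifferentiableOn ℂ (f i) U) : DifferentiableOn ℂ F U :=
  (hasProdLocallyUniformlyOn_iff_tendstoLocallyUniformlyOn.1 hF).differentiableOn
    (.of_forall fun _ => .fun_finsetProd fun i _ => hf i) hU

lemma norm_deriv_le_tsum_of_hasProdLocallyUniformlyOn (hF : HasProdLocallyUniformlyOn f F U)
    (hU : IsOpen U) (hf : ∀ i, DifferentiableOn ℂ (f i) U) {z : ℂ} (hz : z ∈ U)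
    (hf_le : ∀ i, ‖f i z‖ ≤ 1) (hsum : Summable fun i => ‖deriv (f i) z‖) :
    ‖deriv F z‖ ≤ ∑' i, ‖deriv (f i) z‖ := by
  have hlim := ((hasProdLocallyUniformlyOn_iff_tendstoLocallyUniformlyOn.1 hF).deriv
    (.of_forall fun _ => .fun_finsetProd fun i _ => hf i) hU).tendsto_at hz
  exact le_of_tendsto hlim.norm (.of_forall fun s =>
    (norm_deriv_finsetProd_le (fun i _ => (hf i).differentiableAt (hU.mem_nhds hz))
      fun i _ => hf_le i).trans (hsum.sum_le_tsum s fun i _ => norm_nonneg _))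

end InfiniteProduct

section BlaschkeProduct

/-- The Blaschke factor vanishing at `a`, without the unimodular constant `|a| / a`: it equals `1`
when `a = 1`, and products of these factors converge as soon as `∑ ‖1 - a i‖ < ∞`. -/
def blaschkeFactor (a z : ℂ) : ℂ := (a - z) / (1 - starRingEnd ℂ a * z)

variable {a z : ℂ} {S : ℝ}

lemma one_sub_norm_le_norm_one_sub_conj_mul (ha : ‖a‖ ≤ 1) :
    1 - ‖z‖ ≤ ‖1 - starRingEnd ℂ a * z‖ := by
  have h := norm_sub_norm_le 1 (starRingEnd ℂ a * z)
  rw [norm_one, norm_mul, RCLike.norm_conj] at h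
  linarith [mul_le_of_le_one_left (norm_nonneg z) ha]

lemma one_sub_conj_mul_ne_zero (ha : ‖a‖ ≤ 1) (hz : z ∈ unitDisc) :
    1 - starRingEnd ℂ a * z ≠ 0 :=
  norm_pos_iff.1 <| (sub_pos.2 (mem_unitDisc_iff.1 hz)).trans_le
    (one_sub_norm_le_norm_one_sub_conj_mul ha)

lemma norm_blaschkeFactor_le_one (ha : ‖a‖ ≤ 1) (hz : z ∈ unitDisc) :
    ‖blaschkeFactor a z‖ ≤ 1 := by
  have hidentity : ‖1 - starRingEnd ℂ a * z‖ ^ 2 - ‖a - z‖ ^ 2 = (1 - ‖a‖ ^ 2) * (1 - ‖z‖ ^ 2) := by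
    simp only [← normSq_eq_norm_sq, normSq_apply, sub_re, sub_im, mul_re, mul_im, conj_re, conj_im,
      one_re, one_im]
    ring
  have hnonneg : 0 ≤ (1 - ‖a‖ ^ 2) * (1 - ‖z‖ ^ 2) :=
    mul_nonneg (sub_nonneg.2 (pow_le_one₀ (norm_nonneg a) ha))
      (sub_nonneg.2 (pow_le_one₀ (norm_nonneg z) (mem_unitDisc_iff.1 hz).le))
  rw [blaschkeFactor, norm_div]
  refine div_le_one_of_le₀ (le_of_sq_le_sq ?_ (norm_nonneg _)) (norm_nonneg _)
  linarith

lemma norm_blaschkeFactor_sub_one_le (ha : ‖a‖ ≤ 1) (hz : z ∈ unitDisc) :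
    ‖blaschkeFactor a z - 1‖ ≤ 2 * ‖1 - a‖ / (1 - ‖z‖) := by
  have hdenom := one_sub_conj_mul_ne_zero ha hz
  have heq : blaschkeFactor a z - 1 =
      (starRingEnd ℂ (a - 1) * z - (1 - a)) / (1 - starRingEnd ℂ a * z) := by
    rw [blaschkeFactor, div_sub_one hdenom, map_sub, map_one]
    ring
  have hz' := mem_unitDisc_iff.1 hz
  rw [heq, norm_div]
  gcongr
  · calc
      ‖starRingEnd ℂ (a - 1) * z - (1 - a)‖ ≤ ‖starRingEnd ℂ (a - 1) * z‖ + ‖1 - a‖ :=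
        norm_sub_le _ _
      _ = ‖1 - a‖ * ‖z‖ + ‖1 - a‖ := by rw [norm_mul, RCLike.norm_conj, norm_sub_rev]
      _ ≤ 2 * ‖1 - a‖ := by linarith [mul_le_of_le_one_right (norm_nonneg (1 - a)) hz'.le]
  · exact one_sub_norm_le_norm_one_sub_conj_mul ha

lemma hasDerivAt_blaschkeFactor (ha : ‖a‖ ≤ 1) (hz : z ∈ unitDisc) :
    HasDerivAt (blaschkeFactor a) ((‖a‖ ^ 2 - 1) / (1 - starRingEnd ℂ a * z) ^ 2) z := by
  have hnum : HasDerivAt (fun w => a - w) (-1) z := (hasDerivAt_id z).const_sub a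
  have hdenom : HasDerivAt (fun w => 1 - starRingEnd ℂ a * w) (-starRingEnd ℂ a) z := by
    simpa using ((hasDerivAt_id z).const_mul (starRingEnd ℂ a)).const_sub 1
  refine (hnum.fun_div hdenom (one_sub_conj_mul_ne_zero ha hz)).congr_deriv ?_
  rw [← conj_mul']
  ring

lemma differentiableOn_blaschkeFactor (ha : ‖a‖ ≤ 1) :
    DifferentiableOn ℂ (blaschkeFactor a) unitDisc := fun _ hz =>
  (hasDerivAt_blaschkeFactor ha hz).differentiableAt.differentiableWithinAt

/-- The hypothesis `haS` confines `a` to a Stolz angle with vertex `1`. -/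
lemma norm_one_sub_le_mul_norm_one_sub_conj_mul (haS : ‖1 - a‖ ≤ S * (1 - ‖a‖))
    (hS : 0 ≤ S) (hz : z ∈ unitDisc) :
    ‖1 - z‖ ≤ (1 + S) * ‖1 - starRingEnd ℂ a * z‖ := by
  have hz' := (mem_unitDisc_iff.1 hz).le
  have ha : 1 - ‖a‖ ≤ ‖1 - starRingEnd ℂ a * z‖ := by
    have h := norm_sub_norm_le 1 (starRingEnd ℂ a * z)
    rw [norm_one, norm_mul, RCLike.norm_conj] at h
    linarith [mul_le_of_le_one_right (norm_nonneg a) hz']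
  calc
    ‖1 - z‖ = ‖(1 - starRingEnd ℂ a * z) - starRingEnd ℂ (1 - a) * z‖ := by
      rw [map_sub, map_one]
      ring_nf
    _ ≤ ‖1 - starRingEnd ℂ a * z‖ + ‖1 - a‖ * ‖z‖ := by
      grw [norm_sub_le, norm_mul (starRingEnd ℂ (1 - a)), RCLike.norm_conj]
    _ ≤ ‖1 - starRingEnd ℂ a * z‖ + S * ‖1 - starRingEnd ℂ a * z‖ := by
      grw [mul_le_of_le_one_right (norm_nonneg _) hz', haS, ha]
    _ = (1 + S) * ‖1 - starRingEnd ℂ a * z‖ := by ring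

lemma norm_one_sub_sq_mul_deriv_blaschkeFactor_le (ha : ‖a‖ ≤ 1) (haS : ‖1 - a‖ ≤ S * (1 - ‖a‖))
    (hS : 0 ≤ S) (hz : z ∈ unitDisc) :
    ‖1 - z‖ ^ 2 * ‖deriv (blaschkeFactor a) z‖ ≤ 2 * (1 + S) ^ 2 * (1 - ‖a‖) := by
  have hdenom : 0 < ‖1 - starRingEnd ℂ a * z‖ := norm_pos_iff.2 (one_sub_conj_mul_ne_zero ha hz)
  have hnum : ‖(‖a‖ ^ 2 - 1 : ℂ)‖ = 1 - ‖a‖ ^ 2 := by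
    rw [norm_sub_rev]
    norm_cast
    exact Real.norm_of_nonneg (sub_nonneg.2 (pow_le_one₀ (norm_nonneg a) ha))
  rw [(hasDerivAt_blaschkeFactor ha hz).deriv, norm_div, norm_pow, hnum, mul_div_assoc',
    div_le_iff₀ (by positivity)]
  calc
    ‖1 - z‖ ^ 2 * (1 - ‖a‖ ^ 2)
      ≤ ((1 + S) * ‖1 - starRingEnd ℂ a * z‖) ^ 2 * (2 * (1 - ‖a‖)) := by
      gcongr
      · exact sub_nonneg.2 (pow_le_one₀ (norm_nonneg a) ha)
      · exact norm_one_sub_le_mul_norm_one_sub_conj_mul haS hS hz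
      · nlinarith
    _ = _ := by ring

variable {ι : Type*} {a : ι → ℂ}

lemma hasProdLocallyUniformlyOn_blaschkeFactor (ha : ∀ i, ‖a i‖ ≤ 1)
    (hsum : Summable fun i => ‖1 - a i‖) :
    HasProdLocallyUniformlyOn (fun i => blaschkeFactor (a i))
      (fun z => ∏' i, blaschkeFactor (a i) z) unitDisc := by
  refine hasProdLocallyUniformlyOn_of_forall_compact isOpen_unitDisc fun K hK hKc => ?_
  obtain ⟨r, hr, hKr⟩ := exists_lt_subset_ball hKc.isClosed hK
  have hsum' : Summable fun i => 2 * ‖1 - a i‖ / (1 - r) := (hsum.mul_left 2).div_const _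
  have hprod := hsum'.hasProdUniformlyOn_one_add (f := fun i z => blaschkeFactor (a i) z - 1) hKc
    (.of_forall fun i z hz => ?_) fun i => ?_
  · simpa using hprod
  · have hzr : ‖z‖ < r := mem_ball_zero_iff.1 (hKr hz)
    grw [norm_blaschkeFactor_sub_one_le (ha i) (hK hz), hzr]
    linarith
  · exact ((differentiableOn_blaschkeFactor (ha i)).continuousOn.mono hK).sub continuousOn_const

lemma differentiableOn_tprod_blaschkeFactor (ha : ∀ i, ‖a i‖ ≤ 1)
    (hsum : Summable fun i => ‖1 - a i‖) :
    DifferentiableOn ℂ (fun z => ∏' i, blaschkeFactor (a i) z) unitDisc :=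
  differentiableOn_of_hasProdLocallyUniformlyOn (hasProdLocallyUniformlyOn_blaschkeFactor ha hsum)
    isOpen_unitDisc fun i => differentiableOn_blaschkeFactor (ha i)

lemma norm_tprod_blaschkeFactor_le_one (ha : ∀ i, ‖a i‖ ≤ 1)
    (hsum : Summable fun i => ‖1 - a i‖) (hz : z ∈ unitDisc) :
    ‖∏' i, blaschkeFactor (a i) z‖ ≤ 1 :=
  norm_le_one_of_hasProd ((hasProdLocallyUniformlyOn_blaschkeFactor ha hsum).hasProd hz)
    fun i => norm_blaschkeFactor_le_one (ha i) hz

lemma mapsTo_mul_tprod_blaschkeFactor (ha : ∀ i, ‖a i‖ ≤ 1)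
    (hsum : Summable fun i => ‖1 - a i‖) :
    MapsTo (fun z => z * ∏' i, blaschkeFactor (a i) z) unitDisc unitDisc := fun z hz => by
  rw [mem_unitDisc_iff, norm_mul]
  exact (mul_le_of_le_one_right (norm_nonneg z)
    (norm_tprod_blaschkeFactor_le_one ha hsum hz)).trans_lt (mem_unitDisc_iff.1 hz)

lemma norm_one_sub_sq_mul_deriv_tprod_blaschkeFactor_le (ha : ∀ i, ‖a i‖ ≤ 1)
    (haS : ∀ i, ‖1 - a i‖ ≤ S * (1 - ‖a i‖)) (hS : 0 ≤ S)
    (hsum : Summable fun i => 1 - ‖a i‖) (hz : z ∈ unitDisc) :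
    ‖1 - z‖ ^ 2 * ‖deriv (fun w => ∏' i, blaschkeFactor (a i) w) z‖ ≤
      2 * (1 + S) ^ 2 * ∑' i, (1 - ‖a i‖) := by
  have hpos : 0 < ‖1 - z‖ ^ 2 := by
    have : 1 - z ≠ 0 := by
      rintro h
      simp [← sub_eq_zero.1 h, mem_unitDisc_iff] at hz
    positivity
  have hle := fun i => norm_one_sub_sq_mul_deriv_blaschkeFactor_le (ha i) (haS i) hS hz
  have hderiv : Summable fun i => ‖1 - z‖ ^ 2 * ‖deriv (blaschkeFactor (a i)) z‖ :=
    .of_nonneg_of_le (fun i => by positivity) hle (hsum.mul_left _)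
  have hsum' : Summable fun i => ‖1 - a i‖ :=
    .of_nonneg_of_le (fun i => norm_nonneg _) haS (hsum.mul_left S)
  calc
    _ ≤ ‖1 - z‖ ^ 2 * ∑' i, ‖deriv (blaschkeFactor (a i)) z‖ := by
      gcongr
      exact norm_deriv_le_tsum_of_hasProdLocallyUniformlyOn
        (hasProdLocallyUniformlyOn_blaschkeFactor ha hsum') isOpen_unitDisc
        (fun i => differentiableOn_blaschkeFactor (ha i)) hz
        (fun i => norm_blaschkeFactor_le_one (ha i) hz) ((summable_mul_left_iff hpos.ne').1 hderiv)
    _ = ∑' i, ‖1 - z‖ ^ 2 * ‖deriv (blaschkeFactor (a i)) z‖ := tsum_mul_left.symm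
    _ ≤ ∑' i, 2 * (1 + S) ^ 2 * (1 - ‖a i‖) := hderiv.tsum_le_tsum hle (hsum.mul_left _)
    _ = _ := tsum_mul_left

theorem wcoBounded_one_sub_sq_mul_tprod_blaschkeFactor (ha : ∀ i, ‖a i‖ ≤ 1)
    (haS : ∀ i, ‖1 - a i‖ ≤ S * (1 - ‖a i‖)) (hS : 0 ≤ S) (hsum : Summable fun i => 1 - ‖a i‖) :
    WCOBounded (fun z => (1 - z) ^ 2) (fun z => z * ∏' i, blaschkeFactor (a i) z) := by
  have hsum' : Summable fun i => ‖1 - a i‖ :=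
    .of_nonneg_of_le (fun i => norm_nonneg _) haS (hsum.mul_left S)
  have hprod := differentiableOn_tprod_blaschkeFactor ha hsum'
  have hone_sub : ∀ z ∈ unitDisc, ‖1 - z‖ ≤ 2 := fun z hz => by
    linarith [norm_sub_le 1 z, mem_unitDisc_iff.1 hz, norm_one (α := ℂ)]
  refine wcoBounded_of_norm_deriv_le (K := 4) (M := 4 + 2 * (1 + S) ^ 2 * ∑' i, (1 - ‖a i‖))
    (by fun_prop) (by fun_prop) (mapsTo_mul_tprod_blaschkeFactor ha hsum') (zero_mul _)
    (fun z hz => ?_) (fun z hz => ?_)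
  · have hu : deriv (fun w : ℂ => (1 - w) ^ 2) z = -(2 * (1 - z)) := by
      simpa using (((hasDerivAt_id z).const_sub 1).fun_pow 2).deriv
    rw [hu, norm_neg, norm_mul, Complex.norm_two]
    linarith [hone_sub z hz]
  · have hφ : deriv (fun w => w * ∏' i, blaschkeFactor (a i) w) z =
        (∏' i, blaschkeFactor (a i) z) + z * deriv (fun w => ∏' i, blaschkeFactor (a i) w) z := by
      simpa using ((hasDerivAt_id z).fun_mul
        (hprod.differentiableAt (isOpen_unitDisc.mem_nhds hz)).hasDerivAt).deriv
    have hB' := norm_one_sub_sq_mul_deriv_tprod_blaschkeFactor_le ha haS hS hsum hz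
    rw [hφ, norm_mul, norm_pow]
    set B' := deriv (fun w => ∏' i, blaschkeFactor (a i) w) z
    calc
      _ ≤ ‖1 - z‖ ^ 2 * (1 + 1 * ‖B'‖) := by
        grw [norm_add_le, norm_mul, norm_tprod_blaschkeFactor_le_one ha hsum' hz,
          (mem_unitDisc_iff.1 hz).le]
      _ = ‖1 - z‖ ^ 2 + ‖1 - z‖ ^ 2 * ‖B'‖ := by ring
      _ ≤ 2 ^ 2 + 2 * (1 + S) ^ 2 * ∑' i, (1 - ‖a i‖) := by
        grw [hB', hone_sub z hz]
      _ = _ := by norm_num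

end BlaschkeProduct

lemma one_sub_blaschkeZero (n : ℕ) :
    1 - blaschkeZero n = ((1 / ((n + 2 : ℕ) : ℝ) ^ 2 : ℝ) : ℂ) := by
  rw [blaschkeZero]
  push_cast
  ring

lemma norm_blaschkeZero (n : ℕ) : ‖blaschkeZero n‖ = 1 - 1 / ((n + 2 : ℕ) : ℝ) ^ 2 := by
  have hle : 1 / ((n + 2 : ℕ) : ℝ) ^ 2 ≤ 1 :=
    div_le_one_of_le₀ (one_le_pow₀ (by norm_cast; lia)) (by positivity)
  rw [← sub_sub_cancel 1 (blaschkeZero n), one_sub_blaschkeZero, ← ofReal_one, ← ofReal_sub,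
    Complex.norm_of_nonneg (sub_nonneg.2 hle)]

lemma norm_one_sub_blaschkeZero (n : ℕ) : ‖1 - blaschkeZero n‖ = 1 - ‖blaschkeZero n‖ := by
  rw [norm_blaschkeZero, one_sub_blaschkeZero, Complex.norm_of_nonneg (by positivity),
    sub_sub_cancel]

lemma summable_norm_one_sub_blaschkeZero : Summable fun n => ‖1 - blaschkeZero n‖ := by
  simp_rw [norm_one_sub_blaschkeZero, norm_blaschkeZero, sub_sub_cancel]
  exact (summable_nat_add_iff 2).2 (Real.summable_one_div_nat_pow.2 one_lt_two)

/-- With `u(z) = (1 − z)²` and `φ` the infinite Blaschke product with zeros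
`(1 − 1/n²)_{n ≥ 1}`, the product defining `φ` converges on `𝔻`, `φ` is a
holomorphic self-map of `𝔻`, and the weighted composition operator `W_{u,φ}`
is bounded on the Dirichlet space. -/
theorem wco_bounded_blaschke_example :
    (∀ z ∈ unitDisc, Multipliable fun n : ℕ =>
      (blaschkeZero n - z) / (1 - (starRingEnd ℂ) (blaschkeZero n) * z)) ∧
    DifferentiableOn ℂ blaschkeProd unitDisc ∧
    Set.MapsTo blaschkeProd unitDisc unitDisc ∧
    WCOBounded (fun z => (1 - z) ^ 2) blaschkeProd := by
  have hle_one : ∀ n, ‖blaschkeZero n‖ ≤ 1 := fun n =>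
    sub_nonneg.1 (norm_one_sub_blaschkeZero n ▸ norm_nonneg _)
  have hsum := summable_norm_one_sub_blaschkeZero
  exact ⟨fun z hz =>
      ((hasProdLocallyUniformlyOn_blaschkeFactor hle_one hsum).hasProd hz).multipliable,
    differentiableOn_id.mul (differentiableOn_tprod_blaschkeFactor hle_one hsum),
    mapsTo_mul_tprod_blaschkeFactor hle_one hsum,
    wcoBounded_one_sub_sq_mul_tprod_blaschkeFactor (S := 1) hle_one
      (fun n => (norm_one_sub_blaschkeZero n).trans_le (one_mul _).ge) zero_le_one
      (hsum.congr norm_one_sub_blaschkeZero)⟩
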